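/- Let r, d ≥ 1 be integers, (n_k)_{k≥1} a Hadamard lacunary sequence, and φ = ∑_{i=1}^r φ_i ∈ H²(𝔻, ℂ^d), where σ(φ_i) ⊆ {n_k + i − 1 : k ≥ 1} for i = 1, …, r. Suppose that for every m ≥ 1 the linear span in (ℂ^d)^r ≅ ℂ^{dr} of the vectors (φ̂_1(n_k), φ̂_2(n_k + 1), …, φ̂_r(n_k + r − 1)) over all k ≥ m equals ℂ^{dr}. Then φ is cyclic for the backward shift on H²(𝔻, ℂ^d). -/

import Mathlib

open scoped InnerProductSpace ENNReal
noncomputable section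

/-- The Hardy space `H²(𝔻, X)` identified with `ℓ²(ℕ, X)`. -/
abbrev H2 (X : Type*) [NormedAddCommGroup X] [InnerProductSpace ℂ X] : Type _ :=
  lp (fun _ : ℕ => X) 2

variable {X : Type*} [NormedAddCommGroup X] [InnerProductSpace ℂ X]

/-- The backward shift `S*` on `H²(𝔻, X)`. -/
def bshift (f : H2 X) : H2 X :=
  ⟨fun n => f (n + 1), by
    have h : Summable fun n : ℕ => ‖f n‖ ^ (2 : ℝ≥0∞).toReal :=
      (memℓp_gen_iff (by norm_num)).1 (lp.memℓp f)
    exact memℓp_gen ((summable_nat_add_iff 1).2 h)⟩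

/-- `E_F`: the smallest closed `S*`-invariant subspace containing the family `F`. -/
def EF (F : Set (H2 X)) : Submodule ℂ (H2 X) :=
  (Submodule.span ℂ {g : H2 X | ∃ f ∈ F, ∃ n : ℕ, g = bshift^[n] f}).topologicalClosure

/-- `E_f` for a single function. -/
def Ef (f : H2 X) : Submodule ℂ (H2 X) :=
  EF {f}

/-- `X_*(F) = ⋂_m closed-span {f̂(k) : k ≥ m, f ∈ F}`. -/
def XstarF (F : Set (H2 X)) : Submodule ℂ X :=
  ⨅ m : ℕ, (Submodule.span ℂ {x : X | ∃ f ∈ F, ∃ k ≥ m, x = f k}).topologicalClosure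

def Xstar (f : H2 X) : Submodule ℂ X := XstarF {f}

/-- `P : X → X` is an orthogonal projection: idempotent and self-adjoint. -/
def IsOrthoProj {Y : Type*} [NormedAddCommGroup Y] [InnerProductSpace ℂ Y]
    (P : Y →L[ℂ] Y) : Prop :=
  (∀ x, P (P x) = P x) ∧ ∀ x y, ⟪P x, y⟫_ℂ = ⟪x, P y⟫_ℂ

/-- A sequence in a Hilbert space is completely relatively compact if for every orthogonal
projection `P` the normalized sequence `{P aₖ / ‖P aₖ‖ : P aₖ ≠ 0}` is relatively compact. -/
def CRC {Y : Type*} [NormedAddCommGroup Y] [InnerProductSpace ℂ Y] (a : ℕ → Y) : Prop :=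
  ∀ P : Y →L[ℂ] Y, IsOrthoProj P →
    IsCompact (closure {v : Y | ∃ k, P (a k) ≠ 0 ∧ v = ‖P (a k)‖⁻¹ • P (a k)})

/-- A subset of `ℕ` is Hadamard lacunary. -/
def HadLac (Λ : Set ℕ) : Prop :=
  ∃ d : ℝ, 1 < d ∧ ∀ m ∈ Λ, ∀ n ∈ Λ, m < n → d * m ≤ n

/-- The Fourier spectrum. -/
def spec (f : H2 X) : Set ℕ := {k : ℕ | f k ≠ 0}

/-- `H²(𝔻, Y)` for a subspace `Y ⊆ X`, as a submodule of `H²(𝔻, X)`. -/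
def H2sub (Y : Submodule ℂ X) : Submodule ℂ (H2 X) where
  carrier := {g : H2 X | ∀ n, g n ∈ Y}
  add_mem' := by
    intro a b ha hb n
    have : (↑(a + b) : ∀ _ : ℕ, X) n = a n + b n := by
      rw [lp.coeFn_add]; rfl
    rw [this]
    exact Y.add_mem (ha n) (hb n)
  zero_mem' := by
    intro n
    have : (↑(0 : H2 X) : ∀ _ : ℕ, X) n = 0 := by rw [lp.coeFn_zero]; rfl
    rw [this]
    exact Y.zero_mem
  smul_mem' := by
    intro c a ha n
    have : (↑(c • a) : ∀ _ : ℕ, X) n = c • a n := by rw [lp.coeFn_smul]; rfl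
    rw [this]
    exact Y.smul_mem c (ha n)

/-- A polynomial: finitely many nonzero Taylor coefficients. -/
def PolyH2 (f : H2 X) : Prop := {n : ℕ | f n ≠ 0}.Finite



/-- Summability after composing with a map of bounded fibres. -/
theorem summable_comp_of_fiber {α : Type*} (γ : ℕ → ℝ) (h0 : ∀ p, 0 ≤ γ p) (hs : Summable γ)
    (e : α → ℕ) (M : ℕ)
    (hM : ∀ (u : Finset α) (p : ℕ), (∀ x ∈ u, e x = p) → u.card ≤ M) :
    Summable (fun x => γ (e x)) := by
  classical
  refine summable_of_sum_le (c := M * ∑' p, γ p) (fun x => h0 _) fun u => ?_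
  rw [Finset.sum_comp γ e]
  calc ∑ b ∈ u.image e, (u.filter (fun a => e a = b)).card • γ b
      ≤ ∑ b ∈ u.image e, (M : ℝ) * γ b := by
        refine Finset.sum_le_sum fun b _ => ?_
        rw [nsmul_eq_mul]
        have := hM (u.filter (fun a => e a = b)) b (by intro x hx; simpa using (Finset.mem_filter.1 hx).2)
        have h2 : ((u.filter (fun a => e a = b)).card : ℝ) ≤ M := by exact_mod_cast this
        exact mul_le_mul_of_nonneg_right h2 (h0 b)
    _ = M * ∑ b ∈ u.image e, γ b := by rw [Finset.mul_sum]
    _ ≤ M * ∑' p, γ p := by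
        refine mul_le_mul_of_nonneg_left ?_ (Nat.cast_nonneg _)
        exact hs.sum_le_tsum _ (fun p _ => h0 p)

theorem lac_pow (n : ℕ → ℕ) (c : ℝ) (hc : 1 < c)
    (hlac : ∀ k, c * n k ≤ n (k + 1)) (j s : ℕ) : c ^ s * n j ≤ n (j + s) := by
  induction s with
  | zero => simp
  | succ s ih =>
    calc c ^ (s+1) * n j = c * (c ^ s * n j) := by ring
      _ ≤ c * n (j + s) := by gcongr
      _ ≤ _ := hlac _

theorem lac_fiber (n : ℕ → ℕ) (c : ℝ) (hc : 1 < c) (hmono : StrictMono n)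
    (hlac : ∀ k, c * n k ≤ n (k + 1)) (m : ℕ) :
    ∃ M : ℕ, ∀ (u : Finset (ℕ × ℕ)) (p : ℕ),
      (∀ x ∈ u, n (x.1 + 1 + x.2) - n x.1 + m = p) → u.card ≤ M := by
  classical
  obtain ⟨M, hM⟩ := pow_unbounded_of_one_lt (c / (c - 1)) hc
  refine ⟨M, fun u p hu => ?_⟩
  rcases u.eq_empty_or_nonempty with rfl | hne
  · simp
  let J : ℕ × ℕ → ℕ := fun x => x.1 + 1 + x.2
  obtain ⟨x0, hx0, hmin⟩ := u.exists_min_image J hne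
  have hlt : ∀ x : ℕ × ℕ, n x.1 < n (J x) := fun x => hmono (by simp only [J]; omega)
  have hinj : Set.InjOn J u := by
    intro x hx y hy hxy
    have h1 := hu x hx
    have h2 := hu y hy
    have h3 := hlt x
    have h4 := hlt y
    change n (J x) - n x.1 + m = p at h1
    change n (J y) - n y.1 + m = p at h2
    rw [← hxy] at h2 h4
    have h5 : n x.1 = n y.1 := by omega
    have h6 := hmono.injective h5
    simp only [J] at hxy
    ext
    · exact h6
    · omega
  rw [← Finset.card_image_of_injOn hinj]
  have hsub : u.image J ⊆ Finset.Ico (J x0) (J x0 + M) := by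
    intro j hj
    obtain ⟨x, hx, rfl⟩ := Finset.mem_image.1 hj
    have hle := hmin x hx
    rw [Finset.mem_Ico]
    refine ⟨hle, ?_⟩
    by_contra hcon
    push Not at hcon
    have h1 := hu x hx
    have h2 := hu x0 hx0
    change n (J x) - n x.1 + m = p at h1
    change n (J x0) - n x0.1 + m = p at h2
    have h3 := hlt x
    have h4 := hlt x0
    have h5 : n (J x) ≤ n x.1 + n (J x0) := by omega
    have h6 : c * n x.1 ≤ n (J x) := (hlac x.1).trans (by
      exact_mod_cast hmono.monotone (by simp only [J]; omega))
    have h7 : c ^ M * n (J x0) ≤ n (J x) := (lac_pow n c hc hlac (J x0) M).trans (by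
      exact_mod_cast hmono.monotone hcon)
    have h8 : (0 : ℝ) < n (J x0) := by exact_mod_cast (by omega : 0 < n (J x0))
    have h5' : (n (J x) : ℝ) ≤ n x.1 + n (J x0) := by exact_mod_cast h5
    have hM' : c < c ^ M * (c - 1) := by
      rwa [div_lt_iff₀ (by linarith)] at hM
    nlinarith [mul_lt_mul_of_pos_right hM' h8, mul_le_mul_of_nonneg_left h7 (by linarith : 0 ≤ c - 1),
      mul_le_mul_of_nonneg_left h5' (by linarith : 0 ≤ c)]
  simpa using Finset.card_le_card hsub

theorem lac_gap (n : ℕ → ℕ) (c : ℝ) (hc : 1 < c) (hmono : StrictMono n)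
    (hlac : ∀ k, c * n k ≤ n (k + 1)) (B : ℕ) :
    ∃ K, ∀ k ≥ K, ∀ j < k, n j + B ≤ n k := by
  obtain ⟨K, hK⟩ := exists_nat_gt ((B : ℝ) / (c - 1))
  have hg : ∀ k ≥ K, n k + B ≤ n (k + 1) := by
    intro k hk
    have h1 : (K : ℝ) ≤ n k := by exact_mod_cast hk.trans (hmono.id_le k)
    rw [div_lt_iff₀ (by linarith)] at hK
    have h2 : (B : ℝ) ≤ n k * (c - 1) := hK.le.trans (by
      exact mul_le_mul_of_nonneg_right h1 (by linarith))
    have h3 := hlac k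
    have : (n k : ℝ) + B ≤ n (k + 1) := by nlinarith
    exact_mod_cast this
  refine ⟨K + 1, fun k hk j hj => ?_⟩
  obtain ⟨k', rfl⟩ : ∃ k', k = k' + 1 := ⟨k - 1, by omega⟩
  have := hg k' (by omega)
  have := hmono.monotone (by omega : j ≤ k')
  omega

/-- Bounded-coefficient finite spanning subfamily. -/
theorem finite_frame {V : Type*} [NormedAddCommGroup V] [NormedSpace ℂ V]
    [FiniteDimensional ℂ V] (G : ℕ → V) :
    ∃ (D : ℕ) (a : Fin D → ℕ) (C : ℝ), 0 ≤ C ∧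
      ∀ m, ∃ α : Fin D → ℂ, G m = ∑ l, α l • G (a l) ∧ ∀ l, ‖α l‖ ≤ C * ‖G m‖ := by
  classical
  obtain ⟨κ, a, -, hspan, hli⟩ := exists_linearIndependent' ℂ G
  have : Finite κ := hli.finite
  obtain ⟨D, ⟨eq⟩⟩ := Finite.exists_equiv_fin κ
  have : Fintype κ := Fintype.ofFinite κ
  let b := Module.Basis.span hli
  let L := LinearMap.toContinuousLinearMap b.equivFun.toLinearMap
  refine ⟨D, a ∘ eq.symm, ‖L‖, L.opNorm_nonneg, fun m => ?_⟩
  have hm : G m ∈ Submodule.span ℂ (Set.range (G ∘ a)) := by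
    rw [hspan]; exact Submodule.subset_span ⟨m, rfl⟩
  refine ⟨fun l => L ⟨G m, hm⟩ (eq.symm l), ?_, fun l => ?_⟩
  · have h := b.sum_equivFun ⟨G m, hm⟩
    have h2 := congrArg (Subtype.val) h
    refine h2.symm.trans ?_
    simp only [Submodule.coe_sum, Submodule.coe_smul]
    rw [← eq.symm.sum_comp]
    refine Finset.sum_congr rfl fun l _ => ?_
    congr 1
    simp [b, Module.Basis.span_apply]
  · exact (norm_le_pi_norm (L ⟨G m, hm⟩) _).trans (L.le_opNorm _)

/-- Cauchy-Schwarz for a convergent series. -/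
theorem cs_hasSum (x : ℕ → ℂ) (y : ℂ) (hx : HasSum x y) (f g : ℕ → ℝ)
    (hf : Summable fun s => f s ^ 2) (hg : Summable fun s => g s ^ 2)
    (hb : ∀ s, ‖x s‖ ≤ f s * g s) : ‖y‖ ^ 2 ≤ (∑' s, f s ^ 2) * ∑' s, g s ^ 2 := by
  have ht := (hx.tendsto_sum_nat.norm).pow 2
  refine le_of_tendsto' ht fun T => ?_
  calc ‖∑ i ∈ Finset.range T, x i‖ ^ 2 ≤ (∑ i ∈ Finset.range T, f i * g i) ^ 2 := by
        gcongr
        exact (norm_sum_le _ _).trans (Finset.sum_le_sum fun i _ => hb i)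
    _ ≤ (∑ i ∈ Finset.range T, f i ^ 2) * ∑ i ∈ Finset.range T, g i ^ 2 :=
        Finset.sum_mul_sq_le_sq_mul_sq _ _ _
    _ ≤ _ := by
        refine mul_le_mul (hf.sum_le_tsum _ (fun p _ => sq_nonneg _))
          (hg.sum_le_tsum _ (fun p _ => sq_nonneg _))
          (Finset.sum_nonneg fun _ _ => sq_nonneg _) (tsum_nonneg fun _ => sq_nonneg _)

theorem h2_summable {X : Type*} [NormedAddCommGroup X] [InnerProductSpace ℂ X] (f : H2 X) :
    Summable fun n : ℕ => ‖f n‖ ^ 2 := by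
  have h : Summable fun n : ℕ => ‖f n‖ ^ (2 : ℝ≥0∞).toReal :=
      (memℓp_gen_iff (by norm_num)).1 (lp.memℓp f)
  simpa using h

theorem bshift_iter {X : Type*} [NormedAddCommGroup X] [InnerProductSpace ℂ X] (f : H2 X)
    (q t : ℕ) : (bshift^[q] f) t = f (t + q) := by
  induction q generalizing f with
  | zero => rfl
  | succ q ih =>
    rw [Function.iterate_succ_apply, ih]
    change f (t + q + 1) = _
    rfl

/-- Abstract vanishing argument. -/
theorem vanish {V : Type*} [NormedAddCommGroup V] [NormedSpace ℂ V]
    [FiniteDimensional ℂ V] (n : ℕ → ℕ) (c : ℝ) (hc : 1 < c) (hmono : StrictMono n)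
    (hlac : ∀ k, c * n k ≤ n (k + 1)) (G : ℕ → V) (L : ℕ → V →ₗ[ℂ] ℂ)
    (hG : Summable fun p => ‖G p‖ ^ 2) (hL : ∀ v, Summable fun k => ‖L k v‖ ^ 2)
    (hsep : ∀ v N, (∀ k ≥ N, L k v = 0) → v = 0)
    (heq : ∀ m, ∃ K, ∀ k ≥ K, HasSum (fun s => L (k + s) (G (n (k + s) - n k + m))) 0) :
    ∀ m, G m = 0 := by
  obtain ⟨D, a, C, hC, hfr⟩ := finite_frame G
  choose K hK using heq
  let A : ℕ → ℝ := fun j => ∑ l, ‖L j (G (a l))‖ ^ 2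
  have hA0 : ∀ j, 0 ≤ A j := fun j => Finset.sum_nonneg fun _ _ => sq_nonneg _
  have hA : Summable A := summable_sum fun l _ => hL _
  have hb : ∀ j p, ‖L j (G p)‖ ≤ √(A j) * (D * C * ‖G p‖) := by
    intro j p
    obtain ⟨α, h1, h2⟩ := hfr p
    have hl : ∀ l, ‖L j (G (a l))‖ ≤ √(A j) := fun l =>
      Real.le_sqrt_of_sq_le (Finset.single_le_sum
        (f := fun l => ‖L j (G (a l))‖ ^ 2) (fun _ _ => sq_nonneg _) (Finset.mem_univ l))
    calc ‖L j (G p)‖ = ‖∑ l, α l * L j (G (a l))‖ := by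
          conv_lhs => rw [h1]
          simp
      _ ≤ ∑ l : Fin D, (C * ‖G p‖) * √(A j) := by
          refine (norm_sum_le _ _).trans (Finset.sum_le_sum fun l _ => ?_)
          rw [norm_mul]
          exact mul_le_mul (h2 l) (hl l) (norm_nonneg _) (by positivity)
      _ = _ := by simp; ring
  let Γ : ℕ → ℕ × ℕ → ℝ := fun m x => (D * C * ‖G (n (x.1 + 1 + x.2) - n x.1 + m)‖) ^ 2
  have hΓ : ∀ m, Summable (Γ m) := by
    intro m
    obtain ⟨M, hM⟩ := lac_fiber n c hc hmono hlac m
    have h := summable_comp_of_fiber (fun p => ‖G p‖ ^ 2) (fun _ => sq_nonneg _) hG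
      (fun x : ℕ × ℕ => n (x.1 + 1 + x.2) - n x.1 + m) M hM
    refine (h.mul_left ((D * C) ^ 2)).congr fun x => ?_
    simp only [Γ]; ring
  let ε : ℕ → ℕ → ℝ := fun m k => ∑' s, Γ m (k, s)
  have hε : ∀ m, Summable (ε m) := fun m => (hΓ m).prod
  have hε0 : ∀ m k, 0 ≤ ε m k := fun m k => tsum_nonneg fun _ => sq_nonneg _
  have key : ∀ m N k, K m ≤ k → N ≤ k → ‖L k (G m)‖ ^ 2 ≤ (∑' j, A (j + N)) * ε m k := by
    intro m N k hk hNk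
    have h1 := hK m k hk
    have h2 := (hasSum_nat_add_iff' 1).2 h1
    simp only [Finset.range_one, Finset.sum_singleton, add_zero, Nat.sub_self, zero_add,
      zero_sub] at h2
    have hsA : Summable fun s => A (k + 1 + s) := by
      refine ((summable_nat_add_iff (k+1)).2 hA).congr fun s => ?_
      rw [add_comm]
    have hsq : ∀ s, √(A (k + 1 + s)) ^ 2 = A (k + 1 + s) := fun s => Real.sq_sqrt (hA0 _)
    have h3 := cs_hasSum _ _ h2 (fun s => √(A (k + 1 + s)))
      (fun s => D * C * ‖G (n (k + 1 + s) - n k + m)‖) (by simpa only [hsq] using hsA)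
      ((hΓ m).prod_factor k) (by
        intro s
        have : k + (s + 1) = k + 1 + s := by ring
        rw [this]
        exact hb _ _)
    rw [norm_neg] at h3
    refine h3.trans (mul_le_mul_of_nonneg_right ?_ (hε0 m k))
    simp only [hsq]
    have hinj : Function.Injective (fun s : ℕ => s + (k + 1 - N)) := add_left_injective _
    have := tsum_comp_le_tsum_of_inj ((summable_nat_add_iff N).2 hA) (fun _ => hA0 _) hinj
    refine le_trans (le_of_eq (tsum_congr fun s => ?_)) this
    simp only [Function.comp]
    congr 1
    omega
  -- choose N
  have hlim : Filter.Tendsto (fun N => ∑ l, ∑' k, ε (a l) (k + N)) Filter.atTop (nhds 0) := by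
    have : (0 : ℝ) = ∑ l : Fin D, (0 : ℝ) := by simp
    rw [this]
    exact tendsto_finsetSum _ fun l _ => tendsto_sum_nat_add _
  have hev := (hlim.eventually (gt_mem_nhds (zero_lt_one))).and
    (Filter.eventually_ge_atTop (∑ l, K (a l)))
  obtain ⟨N, hN1, hN2⟩ := hev.exists
  have hKN : ∀ l, K (a l) ≤ N := fun l => (Finset.single_le_sum
    (f := fun l => K (a l)) (fun _ _ => Nat.zero_le _) (Finset.mem_univ l)).trans hN2
  have hAN := (summable_nat_add_iff N).2 hA
  have hΛ0 : 0 ≤ ∑' j, A (j + N) := tsum_nonneg fun _ => hA0 _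
  have hle : ∑' j, A (j + N) ≤ (∑' j, A (j + N)) * ∑ l, ∑' k, ε (a l) (k + N) := by
    have e1 : (∑' j, A (j + N)) * ∑ l, ∑' k, ε (a l) (k + N)
        = ∑' k, ∑ l, (∑' j, A (j + N)) * ε (a l) (k + N) := by
      generalize (∑' j, A (j + N)) = R
      rw [Finset.mul_sum, Summable.tsum_finsetSum]
      · simp_rw [tsum_mul_left]
      · intro l _
        exact ((summable_nat_add_iff N).2 (hε (a l))).mul_left _
    rw [e1]
    refine hAN.tsum_le_tsum (fun k => ?_) ?_
    · exact Finset.sum_le_sum fun l _ => key (a l) N (k + N) ((hKN l).trans (by omega)) (by omega)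
    · exact summable_sum fun l _ => ((summable_nat_add_iff N).2 (hε (a l))).mul_left _
  have hΛ : ∑' j, A (j + N) = 0 := by nlinarith
  have hz : ∀ k ≥ N, A k = 0 := by
    intro k hk
    have h := hAN.le_tsum (k - N) (fun _ _ => hA0 _)
    rw [hΛ, Nat.sub_add_cancel hk] at h
    exact le_antisymm h (hA0 k)
  have hGa : ∀ l, G (a l) = 0 := by
    intro l
    refine hsep _ N fun k hk => ?_
    have h := (Finset.sum_eq_zero_iff_of_nonneg (fun _ _ => sq_nonneg _)).1 (hz k hk) l
      (Finset.mem_univ l)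
    simpa using h
  intro m
  obtain ⟨α, h1, -⟩ := hfr m
  rw [h1]
  simp [hGa]


/-- Sufficient condition for cyclicity of `φ = ∑ᵢ φᵢ` where `σ(φᵢ) ⊆ {nₖ + i − 1}`:
if for every `m` the span of the vectors `(φ̂₁(nₖ), …, φ̂_r(nₖ+r−1))`, `k ≥ m`,
is all of `(ℂ^d)^r`, then `φ` is cyclic. -/
theorem sum_shifted_lacunary_cyclic
    (r d : ℕ) (hr : 1 ≤ r) (hd : 1 ≤ d)
    (n : ℕ → ℕ) (c : ℝ) (hc : 1 < c) (hmono : StrictMono n)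
    (hlac : ∀ k, c * n k ≤ n (k + 1))
    (φ : Fin r → H2 (EuclideanSpace ℂ (Fin d)))
    (hspec : ∀ i : Fin r, spec (φ i) ⊆ {t : ℕ | ∃ k : ℕ, t = n k + (i : ℕ)})
    (hspan : ∀ m : ℕ,
      Submodule.span ℂ {w : PiLp 2 fun _ : Fin r => EuclideanSpace ℂ (Fin d) |
        ∃ k ≥ m, w = fun i : Fin r => (φ i) (n k + (i : ℕ))} = ⊤) :
    Ef (∑ i : Fin r, φ i) = ⊤ := by
  classical
  unfold Ef EF
  rw [Submodule.topologicalClosure_eq_top_iff, Submodule.eq_bot_iff]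
  intro g hg
  rw [Submodule.mem_orthogonal] at hg
  have hg0 : ∀ q : ℕ, ⟪bshift^[q] (∑ i, φ i), g⟫_ℂ = 0 := fun q =>
    hg _ (Submodule.subset_span ⟨_, rfl, q, rfl⟩)
  let G : ℕ → (Fin r → EuclideanSpace ℂ (Fin d)) := fun m i => g (m + i)
  let L : ℕ → (Fin r → EuclideanSpace ℂ (Fin d)) →ₗ[ℂ] ℂ := fun k =>
    ∑ i : Fin r, (innerₛₗ ℂ (φ i (n k + i))) ∘ₗ LinearMap.proj i
  have hLapp : ∀ k v, L k v = ∑ i : Fin r, ⟪φ i (n k + i), v i⟫_ℂ := by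
    intro k v
    simp [L]
  have hgs := h2_summable g
  have hmain : ∀ m, G m = 0 := by
    refine vanish n c hc hmono hlac G L ?_ ?_ ?_ ?_
    · -- summability of windows
      refine Summable.of_nonneg_of_le (fun _ => sq_nonneg _) (fun p => ?_)
        (summable_sum (s := Finset.univ)
          (f := fun (i : Fin r) p => ‖g (p + i)‖ ^ 2) fun i _ => (summable_nat_add_iff (i : ℕ)).2 hgs)
      have : ‖G p‖ ≤ √(∑ i : Fin r, ‖g (p + i)‖ ^ 2) := by
        rw [pi_norm_le_iff_of_nonneg (Real.sqrt_nonneg _)]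
        intro i
        exact Real.le_sqrt_of_sq_le (Finset.single_le_sum
          (f := fun i : Fin r => ‖g (p + i)‖ ^ 2) (fun _ _ => sq_nonneg _) (Finset.mem_univ i))
      calc ‖G p‖ ^ 2 ≤ √(∑ i : Fin r, ‖g (p + i)‖ ^ 2) ^ 2 := by gcongr
        _ = _ := Real.sq_sqrt (Finset.sum_nonneg fun _ _ => sq_nonneg _)
    · intro v
      have hs : ∀ i : Fin r, Summable fun k => ‖φ i (n k + i)‖ ^ 2 := fun i =>
        (h2_summable (φ i)).comp_injective (i := fun k => n k + (i : ℕ))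
          (fun x y h => hmono.injective (by simpa using h))
      refine Summable.of_nonneg_of_le (fun _ => sq_nonneg _) (fun k => ?_)
        ((summable_sum (s := Finset.univ) fun i _ => hs i).mul_right (∑ i, ‖v i‖ ^ 2))
      rw [hLapp]
      refine le_trans ?_ (Finset.sum_mul_sq_le_sq_mul_sq _ _ _)
      gcongr
      exact (norm_sum_le _ _).trans (Finset.sum_le_sum fun i _ => norm_inner_le_norm _ _)
    · intro v N hv
      have hmem : (WithLp.toLp 2 v : PiLp 2 fun _ : Fin r => EuclideanSpace ℂ (Fin d)) ∈
          (Submodule.span ℂ {w : PiLp 2 fun _ : Fin r => EuclideanSpace ℂ (Fin d) |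
            ∃ k ≥ N, w = fun i : Fin r => (φ i) (n k + (i : ℕ))})ᗮ := by
        rw [Submodule.mem_orthogonal]
        intro u hu
        induction hu using Submodule.span_induction with
        | mem x hx =>
          obtain ⟨k, hk, hx⟩ := hx
          have h := hv k hk
          rw [hLapp] at h
          rw [PiLp.inner_apply, ← h]
          refine Finset.sum_congr rfl fun i _ => ?_
          rw [hx]
        | zero => simp
        | add x y _ _ hx hy => rw [inner_add_left, hx, hy, add_zero]
        | smul a x _ hx => rw [inner_smul_left, hx, mul_zero]
      rw [hspan N, Submodule.top_orthogonal_eq_bot, Submodule.mem_bot] at hmem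
      simpa using hmem
    · intro m
      obtain ⟨K, hK⟩ := lac_gap n c hc hmono hlac (m + r)
      refine ⟨K + m, fun k hk => ?_⟩
      have hkm : m ≤ n k := le_trans (by omega) (hmono.le_apply (x := k))
      have hone : ∀ i : Fin r, HasSum (fun s => ⟪φ i (n (k + s) + i), G (n (k + s) - n k + m) i⟫_ℂ)
          ⟪bshift^[n k - m] (φ i), g⟫_ℂ := by
        intro i
        have h := lp.hasSum_inner (𝕜 := ℂ) (bshift^[n k - m] (φ i)) g
        have hinj : Function.Injective (fun s : ℕ => n (k + s) - n k + m + (i : ℕ)) := by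
          intro x y hxy
          have h1 := hmono.monotone (by omega : k ≤ k + x)
          have h2 := hmono.monotone (by omega : k ≤ k + y)
          have h3 : n (k + x) = n (k + y) := by simp only at hxy; omega
          have := hmono.injective h3
          omega
        rw [← hinj.hasSum_iff] at h
        · refine (congrArg (fun F => HasSum F _) (funext fun s => ?_)).mp h
          have h1 := hmono.monotone (by omega : k ≤ k + s)
          simp only [Function.comp, G]
          rw [bshift_iter, show n (k + s) - n k + m + (i : ℕ) + (n k - m) = n (k + s) + i by omega]
        · intro t ht
          rw [bshift_iter]
          by_contra hne
          have hne' : φ i (t + (n k - m)) ≠ 0 := by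
            intro h0
            rw [h0, inner_zero_left] at hne
            exact hne rfl
          obtain ⟨j, hj⟩ := hspec i hne'
          by_cases hjk : j < k
          · have := hK k (by omega) j hjk
            have := i.2
            omega
          · apply ht
            refine ⟨j - k, ?_⟩
            have h1 := hmono.monotone (by omega : k ≤ j)
            simp only
            rw [show k + (j - k) = j by omega]
            omega
      have hsum := hasSum_sum (s := Finset.univ) fun i _ => hone i
      have hz : ∑ i, ⟪bshift^[n k - m] (φ i), g⟫_ℂ = 0 := by
        rw [← hg0 (n k - m), ← sum_inner]
        congr 1
        ext t : 2
        rw [bshift_iter, lp.coeFn_sum, lp.coeFn_sum, Finset.sum_apply, Finset.sum_apply]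
        refine Finset.sum_congr rfl fun i _ => ?_
        rw [bshift_iter]
      rw [hz] at hsum
      simpa only [hLapp] using hsum
  ext t : 2
  have := congrFun (hmain t) ⟨0, hr⟩
  simpa [G] using this


end
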